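/- arXiv:1112.4780 — 2 statements merged into one kernel-verified Lean document; each statement's English description precedes it below -/
import Mathlib

section
/- For every a ∈ ℂ ∖ {0}, the critical value −a of g_a does not belong to E₀(a), the connected component of the basin Ω(a) containing 0. -/
/-!
Suppose `-a ∈ E₀(a)`; the contradiction comes from the inverse branches of `g_a`.

*Trap.* Fix `r < ρ` such that `g_a` maps `|z| ≤ r` into `|z| > ρ` and `|z| ≥ ρ` into `|z| < r`
(`exists_isTrap`). For even `m` put `B = {z | r < |g_a^m z| < ρ}` and
`K = {z | r ≤ |g_a^(m+1) z| ≤ ρ}`. Then `K` is compact, `K ⊆ B`, and every `w` with `g_a w ∈ B`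
lies in `K`. The complement of `K` in the sphere is the union of two disjoint open sets, one
containing `0` and the other `∞`, so `z` has no continuous logarithm on `K`
(`not_hasLogOn_closedAnnulusPreimage`).

*Inverse branches.* `E₀(a)` is connected, contains both critical values `0` and `-a`, and each of
its points enters `|z| < r` along the even iterates. Hence for `m` large `(z + a) / z` has a
holomorphic logarithm on `B` (`logRatio_of_mem_E0`), and so a holomorphic square root `S`. The two
maps `h = -1 ± S` are inverse branches of `g_a`, holomorphic from `B` into `K`, and
`z * h₁ z * h₂ z = -a`.

*Contraction against winding.* By the last identity, if `φ` has no continuous logarithm on `K` then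
`h₁ ∘ φ` or `h₂ ∘ φ` has none either. Starting from `φ z = z`, there are compositions of every
length `n` without a logarithm (`exists_expanded_words`). On the other hand, `B` is bounded and `h₁`,
`h₂` map it strictly inside itself, so (the Earle–Hamilton argument) each of them can be expanded
by a factor `1 + ε` about any given value and still map `B` to `B`; with Cauchy's estimate this
bounds the derivative of an `n`-fold composition by `C (1 + ε)^(-n)`, locally uniformly. For large
`n` such a composition is nearly constant on each component of `B`, and bounded away from `0`, so
it does have a logarithm on `K` (`eventually_hasLogOn`): a contradiction.
-/

open Filter Topology OnePoint

/-- The quadratic rational map `g_a(z) = a / (z ^ 2 + 2 * z)` viewed as a self-map of the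
Riemann sphere `ℂ̂ = OnePoint ℂ`, with `G_a ∞ = 0` and `G_a 0 = G_a (-2) = ∞`. -/
noncomputable def Ga (a : ℂ) : OnePoint ℂ → OnePoint ℂ :=
  OnePoint.rec ((0 : ℂ) : OnePoint ℂ)
    (fun w => if w ^ 2 + 2 * w = 0 then ∞ else ((a / (w ^ 2 + 2 * w) : ℂ) : OnePoint ℂ))

/-- The attracting basin `Ω(a)` of the superattracting 2-cycle `{0, ∞}` of `G_a`. -/
noncomputable def basin (a : ℂ) : Set (OnePoint ℂ) :=
  {z | Tendsto (fun n => (Ga a)^[2 * n] z) atTop (𝓝 ((0 : ℂ) : OnePoint ℂ)) ∨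
       Tendsto (fun n => (Ga a)^[2 * n] z) atTop (𝓝 (∞ : OnePoint ℂ))}

/-- `E₀(a)`: the connected component of the basin `Ω(a)` containing `0`. -/
noncomputable def E0 (a : ℂ) : Set (OnePoint ℂ) :=
  connectedComponentIn (basin a) ((0 : ℂ) : OnePoint ℂ)

/-- `E_∞(a)`: the connected component of the basin `Ω(a)` containing `∞`. -/
noncomputable def Einf (a : ℂ) : Set (OnePoint ℂ) :=
  connectedComponentIn (basin a) (∞ : OnePoint ℂ)

/-! ### Planar topology: the logarithm on a set separating `0` from `∞` -/

/-- The identity has no logarithm on the circle `|z| = R` that extends continuously to the plane: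
along the circle, `(Im (l z) - arg z) / 2π` would be a continuous integer-valued function that
changes by `-1` over a full turn. -/
lemma no_log_on_circle {l : ℂ → ℂ} (hl : Continuous l) {R : ℝ} (hR : 0 < R)
    (h : ∀ z : ℂ, ‖z‖ = R → Complex.exp (l z) = z) : False := by
  set p : ℝ → ℂ := fun t => R * Complex.exp (t * Complex.I) with hp
  have hpn : ∀ t, ‖p t‖ = R := fun t => by
    simp [hp, Complex.norm_exp_ofReal_mul_I, abs_of_pos hR]
  set c : ℝ → ℝ := fun t => ((l (p t)).im - t) / (2 * Real.pi) with hc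
  have hcc : Continuous c := by fun_prop
  have hint : ∀ t, ∃ k : ℤ, c t = k := fun t => by
    have h1 : Complex.exp (l (p t)) = Complex.exp (Real.log R + t * Complex.I) := by
      rw [h _ (hpn t), Complex.exp_add, ← Complex.ofReal_exp, Real.exp_log hR]
    obtain ⟨k, hk⟩ := Complex.exp_eq_exp_iff_exists_int.1 h1
    refine ⟨k, ?_⟩
    have := congrArg Complex.im hk
    simp at this
    simp only [hc, this]
    field_simp
    ring
  have h2 : c (2 * Real.pi) = c 0 - 1 := by
    have : p (2 * Real.pi) = p 0 := by simp [hp, Complex.exp_two_pi_mul_I]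
    simp only [hc, this]
    field_simp
    ring
  have hmem : c 0 - 1 / 2 ∈ Set.uIcc (c 0) (c (2 * Real.pi)) := by
    rw [h2, Set.mem_uIcc]; right; constructor <;> linarith
  obtain ⟨t, -, ht⟩ := intermediate_value_uIcc hcc.continuousOn hmem
  obtain ⟨k, hk⟩ := hint t
  obtain ⟨j, hj⟩ := hint 0
  have h3 : (2 * k : ℝ) = 2 * j - 1 := by rw [← hk, ← hj, ht]; ring
  have h4 : 2 * k = 2 * j - 1 := by exact_mod_cast h3
  omega

/-- If the complement of `K` is the disjoint union of open sets `N ∋ 0` and `M`, with `M` a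
neighbourhood of `∞`, then `z` has no continuous logarithm on `K`. Such a logarithm extends to the
plane by Tietze, and gluing the exponential of the extension (off `M`) to the identity (off `N`)
gives a nonvanishing continuous function on `ℂ` equal to `z` near `∞`; it has a global logarithm
because `ℂ` is simply connected, contradicting `no_log_on_circle`. -/
lemma no_log_of_separates {K N M : Set ℂ} (hN : IsOpen N) (hM : IsOpen M)
    (hK : K = (N ∪ M)ᶜ) (hNM : Disjoint N M) (h0 : 0 ∈ N)
    (hinf : ∃ R : ℝ, ∀ z : ℂ, R ≤ ‖z‖ → z ∈ M) :
    ¬ ∃ l : ℂ → ℂ, ContinuousOn l K ∧ ∀ z ∈ K, Complex.exp (l z) = z := by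
  classical
  rintro ⟨l, hl, hle⟩
  have hKc : IsClosed K := by rw [hK]; exact (hN.union hM).isClosed_compl
  obtain ⟨g, hg⟩ := ContinuousMap.exists_restrict_eq hKc
    ⟨K.domRestrict l, continuousOn_iff_continuous_domRestrict.1 hl⟩
  have hgK : ∀ z ∈ K, Complex.exp (g z) = z := fun z hz => by
    have := congrArg (fun f : C(K, ℂ) => f ⟨z, hz⟩) hg
    simp only [ContinuousMap.restrict_apply, ContinuousMap.coe_mk, Set.domRestrict_apply] at this
    rw [this, hle z hz]
  -- `F` is the identity off `N`, and the exponential of the extended logarithm off `M`.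
  set F : ℂ → ℂ := fun z => if z ∈ N then Complex.exp (g z) else z with hF
  have hF1 : ∀ z ∈ Nᶜ, F z = z := fun z hz => if_neg hz
  have hF2 : ∀ z ∈ Mᶜ, F z = Complex.exp (g z) := fun z hz => by
    by_cases hzN : z ∈ N
    · exact if_pos hzN
    · rw [hF1 z hzN, hgK z (by rw [hK]; simp_all)]
  have hFc : Continuous F := by
    rw [← continuousOn_univ]
    have hu : (Set.univ : Set ℂ) = Nᶜ ∪ Mᶜ := by
      rw [← Set.compl_inter, hNM.inter_eq, Set.compl_empty]
    rw [hu]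
    refine ContinuousOn.union_of_isClosed ?_ ?_ hN.isClosed_compl hM.isClosed_compl
    · exact continuousOn_id.congr hF1
    · exact (Complex.continuous_exp.comp g.continuous).continuousOn.congr hF2
  have hF0 : (0 : ℂ) ∉ F '' Set.univ := by
    rintro ⟨z, -, hz⟩
    by_cases hzN : z ∈ N
    · exact Complex.exp_ne_zero _ ((if_pos hzN).symm.trans hz)
    · rw [hF1 z hzN] at hz
      exact hzN (hz ▸ h0)
  have hsc : IsSimplyConnected (Set.univ : Set ℂ) := by
    have : ContractibleSpace (Set.univ : Set ℂ) :=
      (Homeomorph.Set.univ ℂ).contractibleSpace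
    exact (inferInstance : SimplyConnectedSpace (Set.univ : Set ℂ))
  obtain ⟨f, hf, hfe⟩ := Complex.exists_continuousOn_eqOn_exp_comp hsc isOpen_univ
    hFc.continuousOn hF0
  obtain ⟨R, hR⟩ := hinf
  refine no_log_on_circle (continuousOn_univ.1 hf) (R := |R| + 1) (by positivity) fun z hz => ?_
  have hzM : z ∈ M := hR z (by rw [hz]; linarith [le_abs_self R])
  exact (hfe (Set.mem_univ z)).trans (hF1 z (Set.disjoint_right.1 hNM hzM))

/-! ### Contraction of iterated inverse branches -/

/-- `HasLogOn φ K`: the function `φ` has a continuous logarithm on `K`. -/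
def HasLogOn (φ : ℂ → ℂ) (K : Set ℂ) : Prop :=
  ∃ l : ℂ → ℂ, ContinuousOn l K ∧ ∀ z ∈ K, Complex.exp (l z) = φ z

/-- For each `n` there is a composition `φ` of `n` maps taken from `{h₁, h₂}` which has no
logarithm on `K`. For each `z ∈ B`, expanding every factor about its value along the orbit of `z`
gives a holomorphic `g : B → B` with `g z = φ z` and derivative at `z` multiplied by
`(1 + ε) ^ n`. -/
lemma exists_expanded_words {a : ℂ} (ha : a ≠ 0) {B K : Set ℂ} (hK : IsCompact K)
    (hB : IsOpen B) (hKB : K ⊆ B) {ρ : ℝ} (hBρ : ∀ z ∈ B, ‖z‖ ≤ ρ)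
    {h₁ h₂ : ℂ → ℂ} (hd₁ : DifferentiableOn ℂ h₁ B) (hd₂ : DifferentiableOn ℂ h₂ B)
    (hm₁ : Set.MapsTo h₁ B K) (hm₂ : Set.MapsTo h₂ B K)
    (hprod : ∀ z ∈ B, z * (h₁ z * h₂ z) = -a) (hlog : ¬ HasLogOn (fun z => z) K) :
    ∃ ε > (0 : ℝ), ∀ n : ℕ, ∃ φ : ℂ → ℂ, DifferentiableOn ℂ φ B ∧ Set.MapsTo φ B B ∧
      ¬ HasLogOn φ K ∧ ∀ z ∈ B, ∃ g : ℂ → ℂ, DifferentiableOn ℂ g B ∧ Set.MapsTo g B B ∧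
        g z = φ z ∧ deriv g z = (1 + ε : ℂ) ^ n * deriv φ z := by
  obtain ⟨δ, hδ, hδB⟩ := hK.exists_thickening_subset_open hB hKB
  have hρ : 0 < |ρ| + 1 := by positivity
  -- `ε` times the diameter of `B` must stay below `δ`, the distance from `K` to the complement
  refine ⟨δ / (2 * (|ρ| + 1)), by positivity, fun n => ?_⟩
  set ε : ℝ := δ / (2 * (|ρ| + 1)) with hε
  have hε0 : 0 < ε := by positivity
  induction n with
  | zero =>
    exact ⟨id, differentiableOn_id, Set.mapsTo_id _, hlog, fun z hz =>
      ⟨id, differentiableOn_id, Set.mapsTo_id _, rfl, by simp⟩⟩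
  | succ n ih =>
    obtain ⟨φ, hφd, hφm, hφl, hφg⟩ := ih
    have key : ∀ h : ℂ → ℂ, DifferentiableOn ℂ h B → Set.MapsTo h B K → ¬ HasLogOn (h ∘ φ) K →
        ∃ φ : ℂ → ℂ, DifferentiableOn ℂ φ B ∧ Set.MapsTo φ B B ∧
          ¬ HasLogOn φ K ∧ ∀ z ∈ B, ∃ g : ℂ → ℂ, DifferentiableOn ℂ g B ∧ Set.MapsTo g B B ∧
          g z = φ z ∧ deriv g z = (1 + ε : ℂ) ^ (n + 1) * deriv φ z := by
      intro h hd hm hl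
      refine ⟨h ∘ φ, hd.comp hφd hφm, fun z hz => hKB (hm (hφm hz)), hl, fun z hz => ?_⟩
      obtain ⟨g, hgd, hgm, hgz, hgd'⟩ := hφg z hz
      set H : ℂ → ℂ := fun w => h w + (ε : ℂ) * (h w - h (φ z)) with hH
      have hHd : DifferentiableOn ℂ H B := by
        exact hd.add ((hd.sub (differentiableOn_const _)).const_mul _)
      have hHm : Set.MapsTo H B B := by
        intro w hw
        refine hδB (Metric.mem_thickening_iff.2 ⟨h w, hm hw, ?_⟩)
        have h1 : ‖h w - h (φ z)‖ ≤ 2 * |ρ| := by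
          have e1 := hBρ _ (hKB (hm hw))
          have e2 := hBρ _ (hKB (hm (hφm hz)))
          have := norm_sub_le (h w) (h (φ z))
          linarith [le_abs_self ρ]
        rw [dist_eq_norm]
        simp only [hH, add_sub_cancel_left, norm_mul, Complex.norm_real, Real.norm_eq_abs,
          abs_of_pos hε0]
        calc ε * ‖h w - h (φ z)‖ ≤ ε * (2 * |ρ|) := by gcongr
          _ < ε * (2 * (|ρ| + 1)) := by gcongr; linarith
          _ = δ := by rw [hε]; field_simp
      have hnhds : ∀ w ∈ B, B ∈ 𝓝 w := fun w hw => hB.mem_nhds hw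
      refine ⟨H ∘ g, hHd.comp hgd hgm, hHm.comp hgm, by simp [hH, hgz], ?_⟩
      have d1 : DifferentiableAt ℂ h (φ z) := (hd _ (hφm hz)).differentiableAt (hnhds _ (hφm hz))
      have d2 : DifferentiableAt ℂ φ z := (hφd _ hz).differentiableAt (hnhds _ hz)
      have d3 : DifferentiableAt ℂ g z := (hgd _ hz).differentiableAt (hnhds _ hz)
      have d4 : HasDerivAt H ((1 + ε) * deriv h (φ z)) (g z) := by
        rw [hgz]
        have := d1.hasDerivAt.add ((d1.hasDerivAt.sub_const (h (φ z))).const_mul (ε : ℂ))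
        convert! this using 1
        ring
      rw [(d4.comp z d3.hasDerivAt).deriv, hgd', deriv_comp z d1 d2]
      ring
    -- logarithms of both `h₁ ∘ φ` and `h₂ ∘ φ` would give one of `φ = -a / ((h₁ ∘ φ) (h₂ ∘ φ))`
    by_cases hl₁ : HasLogOn (h₁ ∘ φ) K
    · refine key h₂ hd₂ hm₂ fun hl₂ => hφl ?_
      obtain ⟨l₁, hc₁, he₁⟩ := hl₁
      obtain ⟨l₂, hc₂, he₂⟩ := hl₂
      refine ⟨fun z => Complex.log (-a) - (l₁ z + l₂ z),
        continuousOn_const.sub (hc₁.add hc₂), fun z hz => ?_⟩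
      have hp := hprod _ (hφm (hKB hz))
      have e1 := he₁ z hz
      have e2 := he₂ z hz
      simp only [Function.comp] at e1 e2
      rw [Complex.exp_sub, Complex.exp_log (neg_ne_zero.2 ha), Complex.exp_add, e1, e2, ← hp]
      refine mul_div_cancel_right₀ _ ?_
      rw [← e1, ← e2]
      exact mul_ne_zero (Complex.exp_ne_zero _) (Complex.exp_ne_zero _)
    · exact key h₁ hd₁ hm₁ hl₁

/-- Holomorphic self-maps `φ n` of `B`, whose derivatives decay geometrically and locally uniformly,
have a logarithm on `K` for some `n`: chaining small discs, the oscillation of `φ n` over the part of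
`K` in one component of `B` is at most `C * k ^ n`, which is eventually less than `r ≤ ‖φ n‖`. -/
lemma eventually_hasLogOn {B K : Set ℂ} (hK : IsCompact K) (hB : IsOpen B) (hKB : K ⊆ B)
    {r ρ k : ℝ} (hr : 0 < r) (hk0 : 0 ≤ k) (hk1 : k < 1) (hBr : ∀ z ∈ B, r ≤ ‖z‖)
    (φ : ℕ → ℂ → ℂ) (hd : ∀ n, DifferentiableOn ℂ (φ n) B) (hm : ∀ n, Set.MapsTo (φ n) B B)
    (hderiv : ∀ n, ∀ z ∈ B, ∀ s > 0, Metric.closedBall z s ⊆ B →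
      ‖deriv (φ n) z‖ ≤ ρ / s * k ^ n) :
    ∃ n, HasLogOn (φ n) K := by
  classical
  -- uniform oscillation bound on a small ball about each point of `B`
  have hloc : ∀ x ∈ B, ∃ C : ℝ, ∀ᶠ y in 𝓝 x, ∀ n, ‖φ n y - φ n x‖ ≤ C * k ^ n := by
    intro x hx
    obtain ⟨s, hs, hsB⟩ := Metric.isOpen_iff.1 hB x hx
    have hsub : ∀ y ∈ Metric.ball x (s / 4), Metric.closedBall y (s / 4) ⊆ B := by
      intro y hy w hw
      apply hsB
      rw [Metric.mem_ball] at hy ⊢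
      rw [Metric.mem_closedBall] at hw
      linarith [dist_triangle w y x]
    refine ⟨ρ / (s / 4) * (s / 4), ?_⟩
    filter_upwards [Metric.ball_mem_nhds x (by positivity : 0 < s / 4)] with y hy n
    have hρ0 : 0 ≤ ρ / (s / 4) * k ^ n :=
      (norm_nonneg _).trans (hderiv n x hx _ (by positivity)
        (hsub x (Metric.mem_ball_self (by positivity))))
    have := (convex_ball x (s / 4)).norm_image_sub_le_of_norm_deriv_le
      (f := φ n) (C := ρ / (s / 4) * k ^ n)
      (fun w hw => ((hd n) w (hsub w hw (Metric.mem_closedBall_self (by positivity)))).differentiableAt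
        (hB.mem_nhds (hsub w hw (Metric.mem_closedBall_self (by positivity)))))
      (fun w hw => hderiv n w (hsub w hw (Metric.mem_closedBall_self (by positivity))) _
        (by positivity) (hsub w hw))
      (Metric.mem_ball_self (by positivity)) hy
    calc _ ≤ _ := this
      _ ≤ ρ / (s / 4) * k ^ n * (s / 4) := by
        gcongr
        rw [← dist_eq_norm]; exact (Metric.mem_ball.1 hy).le
      _ = _ := by ring
  -- the same along a connected component, with a constant depending on the two points
  have hcomp : ∀ x ∈ B, ∀ y ∈ connectedComponentIn B x,
      ∃ C : ℝ, ∀ n, ‖φ n y - φ n x‖ ≤ C * k ^ n := by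
    intro x hx y hy
    have hsub := connectedComponentIn_subset B x
    refine isPreconnected_connectedComponentIn.induction₂'
      (fun x y => ∃ C : ℝ, ∀ n, ‖φ n y - φ n x‖ ≤ C * k ^ n) ?_ ?_
      (mem_connectedComponentIn hx) hy
    · intro u hu
      obtain ⟨C, hC⟩ := hloc u (hsub hu)
      refine mem_nhdsWithin_of_mem_nhds ?_
      filter_upwards [hC] with v hv
      exact ⟨⟨C, hv⟩, ⟨C, fun n => by rw [norm_sub_rev]; exact hv n⟩⟩
    · rintro u v w - - - ⟨C, hC⟩ ⟨C', hC'⟩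
      refine ⟨C + C', fun n => ?_⟩
      calc _ = ‖(φ n w - φ n v) + (φ n v - φ n u)‖ := by congr 1; ring
        _ ≤ _ := norm_add_le _ _
        _ ≤ (C + C') * k ^ n := by linarith [hC n, hC' n]
  -- a base point in each connected component of `B`
  set b : ℂ → ℂ := fun z =>
    if hz : (connectedComponentIn B z).Nonempty then hz.some else 0 with hb
  have hbmem : ∀ z ∈ B, b z ∈ connectedComponentIn B z := fun z hz => by
    have : (connectedComponentIn B z).Nonempty := ⟨z, mem_connectedComponentIn hz⟩
    simp only [hb, dif_pos this]
    exact this.some_mem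
  have hbB : ∀ z ∈ B, b z ∈ B := fun z hz => connectedComponentIn_subset _ _ (hbmem z hz)
  have hbloc : ∀ z ∈ B, ∀ᶠ w in 𝓝 z, b w = b z := fun z hz => by
    filter_upwards [hB.connectedComponentIn.mem_nhds (mem_connectedComponentIn hz)] with w hw
    simp only [hb, connectedComponentIn_eq hw]
  obtain ⟨C, hC⟩ : ∃ C : ℝ, ∀ z ∈ K, ∀ n, ‖φ n z - φ n (b z)‖ ≤ C * k ^ n := by
    refine hK.induction_on (p := fun S => ∃ C : ℝ, ∀ z ∈ S, ∀ n, ‖φ n z - φ n (b z)‖ ≤ C * k ^ n)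
      ⟨0, by simp⟩ (fun s t hst ⟨C, hC⟩ => ⟨C, fun z hz => hC z (hst hz)⟩) ?_ ?_
    · rintro s t ⟨C, hC⟩ ⟨C', hC'⟩
      refine ⟨max C C', ?_⟩
      rintro z (hz | hz) n
      · exact (hC z hz n).trans (by gcongr; exact le_max_left _ _)
      · exact (hC' z hz n).trans (by gcongr; exact le_max_right _ _)
    · intro x hx
      have hxB := hKB hx
      obtain ⟨C, hC⟩ := hloc x hxB
      have hx' : x ∈ connectedComponentIn B (b x) := by
        rw [← connectedComponentIn_eq (hbmem x hxB)]; exact mem_connectedComponentIn hxB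
      obtain ⟨C', hC'⟩ := hcomp (b x) (hbB x hxB) x hx'
      refine ⟨_, mem_nhdsWithin_of_mem_nhds (hC.and (hbloc x hxB)), C + C', ?_⟩
      rintro z ⟨hz, hbz⟩ n
      rw [hbz]
      calc _ = ‖(φ n z - φ n x) + (φ n x - φ n (b x))‖ := by congr 1; ring
        _ ≤ _ := norm_add_le _ _
        _ ≤ (C + C') * k ^ n := by linarith [hz n, hC' n]
  have hlim : Tendsto (fun n => C * k ^ n) atTop (𝓝 0) := by
    simpa using (tendsto_pow_atTop_nhds_zero_of_lt_one hk0 hk1).const_mul C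
  obtain ⟨n, hn⟩ := (hlim.eventually (gt_mem_nhds hr)).exists
  have hne : ∀ z ∈ B, φ n z ≠ 0 := fun z hz => by
    have := hBr _ (hm n hz)
    exact norm_pos_iff.1 (by linarith)
  -- `b` is locally constant, and `φ n z / φ n (b z)` lies in the disc of radius `1` about `1`
  refine ⟨n, fun z => Complex.log (φ n (b z)) + Complex.log (φ n z / φ n (b z)), ?_, ?_⟩
  · intro z hz
    have hzB := hKB hz
    refine ContinuousAt.continuousWithinAt ?_
    have hbz := hne _ (hbB z hzB)
    have : ContinuousAt (fun w => Complex.log (φ n (b z)) + Complex.log (φ n w / φ n (b z))) z := by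
      have hcont : ContinuousAt (φ n) z := ((hd n) z hzB).continuousWithinAt.continuousAt
        (hB.mem_nhds hzB)
      refine continuousAt_const.add ((hcont.div_const _).clog ?_)
      have : ‖φ n z / φ n (b z) - 1‖ < 1 := by
        rw [div_sub_one hbz, norm_div, div_lt_one (norm_pos_iff.2 hbz)]
        exact ((hC z hz n).trans_lt hn).trans_le (hBr _ (hm n (hbB z hzB)))
      have h2 := Complex.mem_slitPlane_of_norm_lt_one this
      simpa using h2
    refine this.congr ?_
    filter_upwards [hbloc z hzB] with w hw
    rw [hw]
  · intro z hz
    have h1 := hne _ (hKB hz)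
    have h2 := hne _ (hbB z (hKB hz))
    rw [Complex.exp_add, Complex.exp_log h2, Complex.exp_log (div_ne_zero h1 h2)]
    field_simp

/-- Two holomorphic maps of `B` into a compact subset `K` with `z * (h₁ z * h₂ z) = -a` can exist
only if `z` has a logarithm on `K`. -/
lemma no_strict_inverse_branches {a : ℂ} (ha : a ≠ 0) {B K : Set ℂ} (hK : IsCompact K)
    (hB : IsOpen B) (hKB : K ⊆ B) {r ρ : ℝ} (hr : 0 < r) (hBr : ∀ z ∈ B, r ≤ ‖z‖)
    (hBρ : ∀ z ∈ B, ‖z‖ ≤ ρ)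
    {h₁ h₂ : ℂ → ℂ} (hd₁ : DifferentiableOn ℂ h₁ B) (hd₂ : DifferentiableOn ℂ h₂ B)
    (hm₁ : Set.MapsTo h₁ B K) (hm₂ : Set.MapsTo h₂ B K)
    (hprod : ∀ z ∈ B, z * (h₁ z * h₂ z) = -a) : HasLogOn (fun z => z) K := by
  by_contra hlog
  obtain ⟨ε, hε, H⟩ := exists_expanded_words ha hK hB hKB hBρ
    hd₁ hd₂ hm₁ hm₂ hprod hlog
  choose φ hφd hφm hφl hφg using H
  obtain ⟨n, hn⟩ := eventually_hasLogOn (ρ := ρ) (k := (1 + ε)⁻¹) hK hB hKB hr (by positivity)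
    (inv_lt_one_of_one_lt₀ (by linarith)) hBr φ hφd hφm (by
      intro n z hz s hs hsB
      obtain ⟨g, hgd, hgm, -, hg'⟩ := hφg n z hz
      have hcl : DiffContOnCl ℂ g (Metric.ball z s) := by
        refine DifferentiableOn.diffContOnCl (hgd.mono ?_)
        rw [closure_ball z hs.ne']; exact hsB
      have h1 := Complex.norm_deriv_le_of_forall_mem_sphere_norm_le hs hcl
        (fun w hw => hBρ _ (hgm (hsB (Metric.sphere_subset_closedBall hw))))
      have h2 : ‖(1 + ε : ℂ)‖ = 1 + ε := by
        rw [show (1 + ε : ℂ) = ((1 + ε : ℝ) : ℂ) by push_cast; ring, Complex.norm_real,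
          Real.norm_eq_abs, abs_of_pos (by linarith)]
      rw [hg', norm_mul, norm_pow, h2] at h1
      rw [inv_pow, ← div_eq_mul_inv, le_div_iff₀ (by positivity)]
      linarith)
  exact hφl n hn

/-! ### The sphere map and its trapping neighbourhood -/

lemma Ga_coe (a z : ℂ) : Ga a (z : OnePoint ℂ) =
    if z ^ 2 + 2 * z = 0 then ∞ else ((a / (z ^ 2 + 2 * z) : ℂ) : OnePoint ℂ) := rfl

lemma Ga_infty (a : ℂ) : Ga a ∞ = ((0 : ℂ) : OnePoint ℂ) := rfl

lemma tendsto_coe_cobounded :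
    Tendsto ((↑) : ℂ → OnePoint ℂ) (Bornology.cobounded ℂ) (𝓝 ∞) := by
  rw [Metric.cobounded_eq_cocompact, ← coclosedCompact_eq_cocompact]
  exact tendsto_coe_infty

lemma continuous_Ga {a : ℂ} (ha : a ≠ 0) : Continuous (Ga a) := by
  rw [OnePoint.continuous_iff]
  constructor
  · rw [Ga_infty, coclosedCompact_eq_cocompact, ← Metric.cobounded_eq_cocompact]
    have h1 : Tendsto (fun z : ℂ => z ^ 2 + 2 * z) (Bornology.cobounded ℂ)
        (Bornology.cobounded ℂ) := by
      rw [← tendsto_norm_atTop_iff_cobounded]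
      have hn : Tendsto (fun z : ℂ => ‖z‖) (Bornology.cobounded ℂ) atTop :=
        tendsto_norm_cobounded_atTop
      refine tendsto_atTop_mono' _ ?_ hn
      filter_upwards [hn.eventually_ge_atTop 3] with z hz
      have e1 : ‖z + 2‖ ≥ 1 := by
        have := norm_sub_le (z + 2) 2
        simp only [add_sub_cancel_right, Complex.norm_ofNat] at this
        linarith
      rw [show z ^ 2 + 2 * z = z * (z + 2) by ring, norm_mul]
      nlinarith [norm_nonneg z]
    have h2 : Tendsto (fun z : ℂ => a / (z ^ 2 + 2 * z)) (Bornology.cobounded ℂ) (𝓝 0) := by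
      simpa [div_eq_mul_inv] using (tendsto_inv₀_cobounded.comp h1).const_mul a
    refine ((continuous_coe.tendsto (0 : ℂ)).comp h2).congr' ?_
    filter_upwards [(tendsto_norm_cobounded_atTop.comp h1).eventually_gt_atTop 0] with z hz
    rw [Ga_coe, if_neg (norm_pos_iff.1 hz)]; rfl
  · rw [continuous_iff_continuousAt]
    intro z
    have hq : ContinuousAt (fun w : ℂ => w ^ 2 + 2 * w) z := by fun_prop
    by_cases hz : z ^ 2 + 2 * z = 0
    · have hval : Ga a (z : OnePoint ℂ) = ∞ := by rw [Ga_coe, if_pos hz]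
      rw [ContinuousAt, hval]
      have h1 : Tendsto (fun w : ℂ => w ^ 2 + 2 * w) (𝓝 z) (𝓝 0) := by
        have := hq.tendsto; rwa [hz] at this
      intro s hs
      have h2 : ∀ᶠ q in 𝓝[≠] (0 : ℂ), ((a / q : ℂ) : OnePoint ℂ) ∈ s := by
        have h3 : Tendsto (fun q : ℂ => a / q) (𝓝[≠] 0) (Bornology.cobounded ℂ) := by
          rw [← tendsto_norm_atTop_iff_cobounded]
          have h4 : Tendsto (fun q : ℂ => ‖q⁻¹‖) (𝓝[≠] 0) atTop :=
            tendsto_norm_cobounded_atTop.comp tendsto_inv₀_nhdsNE_zero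
          simpa [div_eq_mul_inv] using h4.const_mul_atTop (norm_pos_iff.2 ha)
        exact (tendsto_coe_cobounded.comp h3).eventually hs
      rw [eventually_nhdsWithin_iff] at h2
      rw [mem_map]
      filter_upwards [h1.eventually h2] with w hw
      simp only [Set.mem_preimage, Ga_coe]
      split_ifs with h
      · exact mem_of_mem_nhds hs
      · exact hw h
    · have h1 : ContinuousAt (fun w : ℂ => ((a / (w ^ 2 + 2 * w) : ℂ) : OnePoint ℂ)) z :=
        continuous_coe.continuousAt.comp (continuousAt_const.div hq hz)
      refine h1.congr ?_
      filter_upwards [hq.eventually_ne hz] with w hw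
      rw [Ga_coe, if_neg hw]

/-- The disc `|z| < r`, as a subset of the sphere. -/
def nearZero (r : ℝ) : Set (OnePoint ℂ) := (↑) '' Metric.ball (0 : ℂ) r

/-- The complement of the disc `|z| ≤ ρ` in the sphere: a neighbourhood of `∞`. -/
def nearInfty (ρ : ℝ) : Set (OnePoint ℂ) := ((↑) '' Metric.closedBall (0 : ℂ) ρ)ᶜ

lemma coe_mem_nearZero {r : ℝ} {z : ℂ} : (z : OnePoint ℂ) ∈ nearZero r ↔ ‖z‖ < r := by
  simp [nearZero]

lemma infty_notMem_nearZero {r : ℝ} : (∞ : OnePoint ℂ) ∉ nearZero r := by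
  simp [nearZero]

lemma coe_mem_nearInfty {ρ : ℝ} {z : ℂ} : (z : OnePoint ℂ) ∈ nearInfty ρ ↔ ρ < ‖z‖ := by
  simp [nearInfty]

lemma infty_mem_nearInfty {ρ : ℝ} : (∞ : OnePoint ℂ) ∈ nearInfty ρ := by
  simp [nearInfty]

lemma isOpen_nearZero (r : ℝ) : IsOpen (nearZero r) := isOpen_image_coe.2 Metric.isOpen_ball

lemma isOpen_nearInfty (ρ : ℝ) : IsOpen (nearInfty ρ) :=
  isOpen_compl_image_coe.2 ⟨Metric.isClosed_closedBall, isCompact_closedBall _ _⟩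

lemma disjoint_near {r ρ : ℝ} (h : r < ρ) : Disjoint (nearZero r) (nearInfty ρ) := by
  rw [Set.disjoint_left]
  intro x
  induction x using OnePoint.rec with
  | infty => exact fun hx => absurd hx infty_notMem_nearZero
  | coe z =>
    rw [coe_mem_nearZero, coe_mem_nearInfty]
    intro h1 h2
    linarith

/-- `IsTrap a r ρ`: the map `Ga a` sends the closed disc `|z| ≤ r` into `|z| > ρ` and
`|z| ≥ ρ` into `|z| < r`, so that the two together form a trapping neighbourhood of the
cycle `{0, ∞}`. -/
structure IsTrap (a : ℂ) (r ρ : ℝ) : Prop where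
  pos : 0 < r
  lt : r < ρ
  zero : ∀ z : ℂ, ‖z‖ ≤ r → Ga a z ∈ nearInfty ρ
  infty : ∀ z : ℂ, ρ ≤ ‖z‖ → Ga a z ∈ nearZero r

lemma exists_isTrap {a : ℂ} (ha : a ≠ 0) : ∃ r ρ, IsTrap a r ρ := by
  have hA : 0 < ‖a‖ := norm_pos_iff.2 ha
  -- `ρ > 8` makes `2 |a| / ρ ^ 2 < r`, and `4 r ρ = |a|` makes `|a| / (3 r) > ρ`
  set ρ : ℝ := 9 + ‖a‖ with hρ
  have hρ0 : 0 < ρ := by positivity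
  set r : ℝ := ‖a‖ / (4 * ρ) with hr
  have hr0 : 0 < r := by positivity
  have hra : r * (4 * ρ) = ‖a‖ := by rw [hr]; field_simp
  have hr1 : r ≤ 1 := by rw [hr, div_le_one (by positivity)]; linarith
  refine ⟨r, ρ, hr0, by linarith, fun z hz => ?_, fun z hz => ?_⟩
  · rw [Ga_coe]
    split_ifs with h
    · exact infty_mem_nearInfty
    · rw [coe_mem_nearInfty, norm_div, lt_div_iff₀ (norm_pos_iff.2 h)]
      have h1 : ‖z ^ 2 + 2 * z‖ ≤ 3 * r := by
        rw [show z ^ 2 + 2 * z = z * (z + 2) by ring, norm_mul]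
        have : ‖z + 2‖ ≤ 3 := by
          have := norm_add_le z 2
          simp only [Complex.norm_ofNat] at this
          linarith
        nlinarith [norm_nonneg z, norm_nonneg (z + 2)]
      nlinarith
  · have h1 : ρ * (ρ / 2) ≤ ‖z ^ 2 + 2 * z‖ := by
      rw [show z ^ 2 + 2 * z = z * (z + 2) by ring, norm_mul]
      have : ρ / 2 ≤ ‖z + 2‖ := by
        have := norm_sub_le (z + 2) 2
        simp only [add_sub_cancel_right, Complex.norm_ofNat] at this
        linarith
      gcongr
    have h0 : 0 < ‖z ^ 2 + 2 * z‖ := by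
      have : 0 < ρ * (ρ / 2) := by positivity
      linarith
    rw [Ga_coe, if_neg (norm_pos_iff.1 h0), coe_mem_nearZero, norm_div, div_lt_iff₀ h0]
    have h2 : 4 * ρ < ρ * (ρ / 2) := by nlinarith
    nlinarith

namespace IsTrap

variable {a : ℂ} {r ρ : ℝ}

lemma Ga_nearZero (h : IsTrap a r ρ) {x : OnePoint ℂ} (hx : x ∈ nearZero r) :
    Ga a x ∈ nearInfty ρ := by
  obtain ⟨z, hz, rfl⟩ := hx
  exact h.zero z (by simpa using (mem_ball_zero_iff.1 hz).le)

lemma Ga_nearInfty (h : IsTrap a r ρ) {x : OnePoint ℂ} (hx : x ∈ nearInfty ρ) :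
    Ga a x ∈ nearZero r := by
  induction x using OnePoint.rec with
  | infty => rw [Ga_infty, coe_mem_nearZero, norm_zero]; exact h.pos
  | coe z => exact h.infty z (coe_mem_nearInfty.1 hx).le

/-- A point whose image lies outside the open trap lies in the open annulus `r < |z| < ρ`. -/
lemma exists_of_Ga_notMem (h : IsTrap a r ρ) {x : OnePoint ℂ} (h0 : Ga a x ∉ nearZero r)
    (hi : Ga a x ∉ nearInfty ρ) : ∃ z : ℂ, x = z ∧ r < ‖z‖ ∧ ‖z‖ < ρ := by
  induction x using OnePoint.rec with
  | infty => exact absurd (h.Ga_nearInfty infty_mem_nearInfty) h0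
  | coe z =>
    refine ⟨z, rfl, ?_, ?_⟩
    · by_contra! hz; exact hi (h.zero z hz)
    · by_contra! hz; exact h0 (h.infty z hz)

end IsTrap

/-- The points of the plane whose `m`-th iterate lies in the open annulus `r < |z| < ρ`. -/
def annulusPreimage (a : ℂ) (r ρ : ℝ) (m : ℕ) : Set ℂ :=
  {z | ∃ w : ℂ, (Ga a)^[m] z = w ∧ r < ‖w‖ ∧ ‖w‖ < ρ}

/-- The points of the plane whose `m`-th iterate lies in the closed annulus `r ≤ |z| ≤ ρ`. -/
def closedAnnulusPreimage (a : ℂ) (r ρ : ℝ) (m : ℕ) : Set ℂ :=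
  {z | (Ga a)^[m] z ∉ nearZero r ∧ (Ga a)^[m] z ∉ nearInfty ρ}

lemma annulusPreimage_subset_closed {a : ℂ} {r ρ : ℝ} {m : ℕ} :
    annulusPreimage a r ρ m ⊆ closedAnnulusPreimage a r ρ m := by
  rintro z ⟨w, hw, h1, h2⟩
  simp only [closedAnnulusPreimage, Set.mem_ofPred_eq, hw, coe_mem_nearZero, coe_mem_nearInfty]
  constructor <;> linarith

lemma closedAnnulusPreimage_succ_subset {a : ℂ} {r ρ : ℝ} (h : IsTrap a r ρ) {m : ℕ} :
    closedAnnulusPreimage a r ρ (m + 1) ⊆ annulusPreimage a r ρ m := by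
  rintro z ⟨h0, hi⟩
  rw [Function.iterate_succ_apply'] at h0 hi
  exact h.exists_of_Ga_notMem h0 hi

lemma annulusPreimage_antitone {a : ℂ} {r ρ : ℝ} (h : IsTrap a r ρ) :
    Antitone (annulusPreimage a r ρ) :=
  antitone_nat_of_succ_le fun _ =>
    annulusPreimage_subset_closed.trans (closedAnnulusPreimage_succ_subset h)

lemma norm_bounds {a : ℂ} {r ρ : ℝ} (h : IsTrap a r ρ) {m : ℕ} {z : ℂ}
    (hz : z ∈ annulusPreimage a r ρ m) : r < ‖z‖ ∧ ‖z‖ < ρ := by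
  obtain ⟨w, hw, h1⟩ := annulusPreimage_antitone h (Nat.zero_le m) hz
  rw [Function.iterate_zero, id, OnePoint.coe_eq_coe] at hw
  rwa [hw]

lemma isOpen_annulusPreimage {a : ℂ} (ha : a ≠ 0) {r ρ : ℝ} {m : ℕ} :
    IsOpen (annulusPreimage a r ρ m) := by
  have h : annulusPreimage a r ρ m = (fun z : ℂ => (Ga a)^[m] z) ⁻¹'
      ((↑) '' {w : ℂ | r < ‖w‖ ∧ ‖w‖ < ρ}) := by
    ext z
    simp only [annulusPreimage, Set.mem_ofPred_eq, Set.mem_preimage, Set.mem_image]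
    constructor
    · rintro ⟨w, hw, h⟩; exact ⟨w, h, hw.symm⟩
    · rintro ⟨w, h, hw⟩; exact ⟨w, hw.symm, h⟩
  rw [h]
  refine IsOpen.preimage (((continuous_Ga ha).iterate m).comp continuous_coe)
    (isOpen_image_coe.2 ?_)
  exact (isOpen_lt continuous_const continuous_norm).inter
    (isOpen_lt continuous_norm continuous_const)

lemma isCompact_closedAnnulusPreimage {a : ℂ} (ha : a ≠ 0) {r ρ : ℝ} (h : IsTrap a r ρ) {m : ℕ} :
    IsCompact (closedAnnulusPreimage a r ρ (m + 1)) := by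
  have hc : Continuous (fun z : ℂ => (Ga a)^[m + 1] z) :=
    ((continuous_Ga ha).iterate _).comp continuous_coe
  refine (isCompact_closedBall (0 : ℂ) ρ).of_isClosed_subset ?_ fun z hz => ?_
  · exact (((isOpen_nearZero r).preimage hc).isClosed_compl).inter
      (((isOpen_nearInfty ρ).preimage hc).isClosed_compl)
  · simpa using (norm_bounds h (closedAnnulusPreimage_succ_subset h hz)).2.le

/-- An odd iterate exchanges `0` and `∞`, so the complement of the closed annulus preimage splits
into an open set around `0` (mapped near `∞`) and one around `∞` (mapped near `0`). -/
lemma not_hasLogOn_closedAnnulusPreimage {a : ℂ} (ha : a ≠ 0) {r ρ : ℝ} (h : IsTrap a r ρ)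
    (n : ℕ) : ¬ HasLogOn (fun z => z) (closedAnnulusPreimage a r ρ (2 * n + 1)) := by
  have hc : Continuous (fun x : OnePoint ℂ => (Ga a)^[2 * n + 1] x) := (continuous_Ga ha).iterate _
  -- `g_a ∘ g_a` fixes both `0` and `∞`
  have hcyc : (Ga a)^[2 * n] ∞ = ∞ := by
    rw [Function.iterate_mul]
    refine Function.iterate_fixed ?_ n
    simp [Ga_infty, Ga_coe]
  have h1 : (Ga a)^[2 * n + 1] ∞ = ((0 : ℂ) : OnePoint ℂ) := by
    rw [Function.iterate_succ_apply', hcyc, Ga_infty]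
  have h2 : (Ga a)^[2 * n + 1] ((0 : ℂ) : OnePoint ℂ) = ∞ := by
    rw [← Ga_infty a, ← Function.iterate_succ_apply, show (2 * n + 1).succ = 2 * (n + 1) by omega]
    rw [Function.iterate_mul]
    refine Function.iterate_fixed ?_ _
    simp [Ga_infty, Ga_coe]
  refine no_log_of_separates ((isOpen_nearInfty ρ).preimage (hc.comp continuous_coe))
    ((isOpen_nearZero r).preimage (hc.comp continuous_coe)) ?_ ?_ ?_ ?_
  · ext z
    simp [closedAnnulusPreimage, and_comm]
  · exact ((disjoint_near h.lt).symm).preimage _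
  · simp only [Set.mem_preimage, Function.comp_apply, h2]
    exact infty_mem_nearInfty
  · have hev : ∀ᶠ z : ℂ in Bornology.cobounded ℂ, (Ga a)^[2 * n + 1] (z : OnePoint ℂ) ∈ nearZero r := by
      refine (hc.continuousAt.tendsto.comp tendsto_coe_cobounded).eventually ?_
      rw [h1]
      exact (isOpen_nearZero r).mem_nhds (coe_mem_nearZero.2 (by simpa using h.pos))
    rw [← comap_norm_atTop, eventually_comap] at hev
    obtain ⟨R, hR⟩ := eventually_atTop.1 hev
    exact ⟨R, fun z hz => hR _ hz z rfl⟩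

/-! ### The component `E₀(a)` and the inverse branches -/

/-- The set of points entering the disc `|z| < r` along the even iterates. -/
def evenBasinZero (a : ℂ) (r : ℝ) : Set (OnePoint ℂ) := {x | ∃ n, (Ga a)^[2 * n] x ∈ nearZero r}

/-- The set of points entering `|z| > ρ` along the even iterates. -/
def evenBasinInfty (a : ℂ) (ρ : ℝ) : Set (OnePoint ℂ) :=
  {x | ∃ n, (Ga a)^[2 * n] x ∈ nearInfty ρ}

lemma IsTrap.nearZero_mono {a : ℂ} {r ρ : ℝ} (h : IsTrap a r ρ) {x : OnePoint ℂ} {m n : ℕ}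
    (hmn : m ≤ n) (hx : (Ga a)^[2 * m] x ∈ nearZero r) : (Ga a)^[2 * n] x ∈ nearZero r := by
  induction n, hmn using Nat.le_induction with
  | base => exact hx
  | succ n _ ih =>
    rw [show 2 * (n + 1) = (2 * n).succ.succ by omega, Function.iterate_succ_apply',
      Function.iterate_succ_apply']
    exact h.Ga_nearInfty (h.Ga_nearZero ih)

lemma IsTrap.nearInfty_mono {a : ℂ} {r ρ : ℝ} (h : IsTrap a r ρ) {x : OnePoint ℂ} {m n : ℕ}
    (hmn : m ≤ n) (hx : (Ga a)^[2 * m] x ∈ nearInfty ρ) : (Ga a)^[2 * n] x ∈ nearInfty ρ := by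
  induction n, hmn using Nat.le_induction with
  | base => exact hx
  | succ n _ ih =>
    rw [show 2 * (n + 1) = (2 * n).succ.succ by omega, Function.iterate_succ_apply',
      Function.iterate_succ_apply']
    exact h.Ga_nearZero (h.Ga_nearInfty ih)

/-- `E₀(a)` is connected and covered by two disjoint open sets, the basins of `0` and of `∞` under
the second iterate, so it lies in the first. -/
lemma E0_subset {a : ℂ} (ha : a ≠ 0) {r ρ : ℝ} (h : IsTrap a r ρ) :
    E0 a ⊆ evenBasinZero a r := by
  by_cases h0 : ((0 : ℂ) : OnePoint ℂ) ∈ basin a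
  swap
  · rw [E0, connectedComponentIn_eq_empty h0]; exact Set.empty_subset _
  have hz : ((0 : ℂ) : OnePoint ℂ) ∈ nearZero r := coe_mem_nearZero.2 (by simpa using h.pos)
  have ho : ∀ n, Continuous (Ga a)^[2 * n] := fun n => (continuous_Ga ha).iterate _
  refine isPreconnected_connectedComponentIn.subset_left_of_subset_union
    (v := evenBasinInfty a ρ) ?_ ?_ ?_ ?_ ?_
  · simp only [evenBasinZero, Set.ofPred_exists]
    exact isOpen_iUnion fun n => (isOpen_nearZero r).preimage (ho n)
  · simp only [evenBasinInfty, Set.ofPred_exists]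
    exact isOpen_iUnion fun n => (isOpen_nearInfty ρ).preimage (ho n)
  · rw [Set.disjoint_left]
    rintro x ⟨n, hn⟩ ⟨m, hm⟩
    exact Set.disjoint_left.1 (disjoint_near h.lt) (h.nearZero_mono (le_max_left n m) hn)
      (h.nearInfty_mono (le_max_right n m) hm)
  · refine (connectedComponentIn_subset _ _).trans ?_
    rintro x (hx | hx)
    · exact Or.inl (hx.eventually ((isOpen_nearZero r).mem_nhds hz)).exists
    · exact Or.inr (hx.eventually ((isOpen_nearInfty ρ).mem_nhds infty_mem_nearInfty)).exists
  · exact ⟨_, mem_connectedComponentIn h0, 0, hz⟩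

/-- `LogRatio a r ρ p q`: off the points entering the trap within some number of steps, there is
a holomorphic branch of `log ((z - q) / (z - p))`. -/
def LogRatio (a : ℂ) (r ρ : ℝ) (p q : ℂ) : Prop :=
  ∃ (n : ℕ) (l : ℂ → ℂ), DifferentiableOn ℂ l (annulusPreimage a r ρ (2 * n)) ∧
    ∀ z ∈ annulusPreimage a r ρ (2 * n), Complex.exp (l z) * (z - p) = z - q

lemma LogRatio.symm {a : ℂ} {r ρ : ℝ} {p q : ℂ} (h : LogRatio a r ρ p q) :
    LogRatio a r ρ q p := by
  obtain ⟨n, l, hd, hl⟩ := h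
  refine ⟨n, fun z => -l z, hd.neg, fun z hz => ?_⟩
  rw [← hl z hz, ← mul_assoc, ← Complex.exp_add, neg_add_cancel, Complex.exp_zero, one_mul]

lemma LogRatio.trans {a : ℂ} {r ρ : ℝ} (h : IsTrap a r ρ) {p q s : ℂ}
    (h₁ : LogRatio a r ρ p q) (h₂ : LogRatio a r ρ q s) : LogRatio a r ρ p s := by
  obtain ⟨n, l, hd, hl⟩ := h₁
  obtain ⟨m, l', hd', hl'⟩ := h₂
  have e1 := annulusPreimage_antitone h (show 2 * n ≤ 2 * max n m by omega)
  have e2 := annulusPreimage_antitone h (show 2 * m ≤ 2 * max n m by omega)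
  refine ⟨max n m, fun z => l' z + l z, (hd'.mono e2).add (hd.mono e1), fun z hz => ?_⟩
  rw [Complex.exp_add, mul_assoc, hl z (e1 hz), hl' z (e2 hz)]

lemma eventually_logRatio {a : ℂ} (ha : a ≠ 0) {r ρ : ℝ} {p : ℂ}
    (hp : (p : OnePoint ℂ) ∈ evenBasinZero a r) : ∀ᶠ q in 𝓝 p, LogRatio a r ρ p q := by
  obtain ⟨n, hn⟩ := hp
  have hc : Continuous (fun z : ℂ => (Ga a)^[2 * n] z) :=
    ((continuous_Ga ha).iterate _).comp continuous_coe
  obtain ⟨δ, hδ, hball⟩ := Metric.isOpen_iff.1 ((isOpen_nearZero r).preimage hc) p hn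
  have hfar : ∀ z ∈ annulusPreimage a r ρ (2 * n), δ ≤ ‖z - p‖ := by
    intro z hz
    by_contra! hlt
    exact (annulusPreimage_subset_closed hz).1 (hball (by rwa [Metric.mem_ball, dist_eq_norm]))
  filter_upwards [Metric.ball_mem_nhds p hδ] with q hq
  rw [Metric.mem_ball, dist_eq_norm] at hq
  have hne : ∀ z ∈ annulusPreimage a r ρ (2 * n), z - p ≠ 0 := fun z hz =>
    norm_pos_iff.1 (hδ.trans_le (hfar z hz))
  -- on the annulus preimage the ratio stays in the disc of radius `1` about `1`
  have hslit : ∀ z ∈ annulusPreimage a r ρ (2 * n), (z - q) / (z - p) ∈ Complex.slitPlane := by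
    intro z hz
    have h1 : ‖(z - q) / (z - p) - 1‖ < 1 := by
      rw [div_sub_one (hne z hz), norm_div, div_lt_one (norm_pos_iff.2 (hne z hz)),
        sub_sub_sub_cancel_left, norm_sub_rev]
      exact hq.trans_le (hfar z hz)
    simpa using Complex.mem_slitPlane_of_norm_lt_one h1
  refine ⟨n, fun z => Complex.log ((z - q) / (z - p)), ?_, fun z hz => ?_⟩
  · intro z hz
    have hd : DifferentiableAt ℂ (fun z => (z - q) / (z - p)) z :=
      (differentiableAt_id.sub_const q).div (differentiableAt_id.sub_const p) (hne z hz)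
    exact (hd.clog (hslit z hz)).differentiableWithinAt
  · rw [Complex.exp_log (Complex.slitPlane_ne_zero (hslit z hz)), div_mul_cancel₀ _ (hne z hz)]

/-- `LogRatio` is an equivalence relation on `E₀(a)` with open classes, hence holds between any two
points of this connected set. -/
lemma logRatio_of_mem_E0 {a : ℂ} (ha : a ≠ 0) {r ρ : ℝ} (h : IsTrap a r ρ) {p q : ℂ}
    (hp : (p : OnePoint ℂ) ∈ E0 a) (hq : (q : OnePoint ℂ) ∈ E0 a) : LogRatio a r ρ p q := by
  have key : ∃ p' q' : ℂ, (p : OnePoint ℂ) = p' ∧ (q : OnePoint ℂ) = q' ∧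
      LogRatio a r ρ p' q' := by
    refine IsPreconnected.induction₂' (s := E0 a) isPreconnected_connectedComponentIn
      (fun x y => ∃ p' q' : ℂ, x = p' ∧ y = q' ∧ LogRatio a r ρ p' q') ?_ ?_ hp hq
    · intro x hx
      refine mem_nhdsWithin_of_mem_nhds ?_
      have hxb := E0_subset ha h hx
      induction x using OnePoint.rec with
      | infty =>
        -- `∞` is not in the basin of `0`
        obtain ⟨n, hn⟩ := hxb
        exact absurd hn (Set.disjoint_right.1 (disjoint_near h.lt)
          (h.nearInfty_mono (m := 0) (Nat.zero_le n) infty_mem_nearInfty))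
      | coe z =>
        rw [nhds_coe_eq, mem_map]
        filter_upwards [eventually_logRatio ha hxb] with w hw
        exact ⟨⟨z, w, rfl, rfl, hw⟩, ⟨w, z, rfl, rfl, hw.symm⟩⟩
    · rintro x y z - - - ⟨p₁, q₁, rfl, rfl, h₁⟩ ⟨p₂, q₂, hpq, rfl, h₂⟩
      rw [OnePoint.coe_eq_coe] at hpq
      subst hpq
      exact ⟨p₁, q₂, rfl, rfl, h₁.trans h h₂⟩
  obtain ⟨p', q', h1, h2, h3⟩ := key
  rw [OnePoint.coe_eq_coe] at h1 h2
  rwa [h1, h2]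

/-- The critical value `-a` of `g_a` never lies in `E₀(a)`, the component of the basin
containing `0`. -/
theorem neg_a_not_mem_E0 (a : ℂ) (ha : a ≠ 0) : ((-a : ℂ) : OnePoint ℂ) ∉ E0 a := by
  intro hmem
  obtain ⟨r, ρ, h⟩ := exists_isTrap ha
  have h0 : ((0 : ℂ) : OnePoint ℂ) ∈ E0 a :=
    mem_connectedComponentIn (connectedComponentIn_nonempty_iff.1 ⟨_, hmem⟩)
  obtain ⟨n, l, hd, hl⟩ := logRatio_of_mem_E0 ha h h0 hmem
  set B := annulusPreimage a r ρ (2 * n) with hB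
  have hB0 : ∀ z ∈ B, z ≠ 0 := fun z hz => norm_pos_iff.1 (h.pos.trans (norm_bounds h hz).1)
  -- `S` is a branch of the square root of `(z + a) / z`
  set S : ℂ → ℂ := fun z => Complex.exp (l z / 2) with hS
  have hSd : DifferentiableOn ℂ S B := (hd.div_const 2).cexp
  have hSsq : ∀ z ∈ B, z * (S z ^ 2 - 1) = a := fun z hz => by
    have h1 := hl z hz
    have h2 : S z ^ 2 = Complex.exp (l z) := by
      rw [hS, ← Complex.exp_nat_mul]; congr 1; push_cast; ring
    rw [h2]
    linear_combination h1
  -- every preimage `w` of a point `z ∈ B` lies in the compact set `K`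
  have hinv : ∀ z ∈ B, ∀ w : ℂ, z * (w ^ 2 + 2 * w) = a → w ∈ closedAnnulusPreimage a r ρ
      (2 * n + 1) := by
    intro z hz w hw
    have hne : w ^ 2 + 2 * w ≠ 0 := fun h0 => ha (by rw [← hw, h0, mul_zero])
    have hG : Ga a (w : OnePoint ℂ) = z := by
      rw [Ga_coe, if_neg hne, OnePoint.coe_eq_coe, div_eq_iff hne, hw]
    have := annulusPreimage_subset_closed hz
    simpa only [closedAnnulusPreimage, Set.mem_ofPred_eq, Function.iterate_succ_apply, hG] using this
  refine not_hasLogOn_closedAnnulusPreimage ha h n ?_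
  refine no_strict_inverse_branches (r := r) (ρ := ρ) (h₁ := fun z => -1 + S z)
    (h₂ := fun z => -1 - S z) ha
    (isCompact_closedAnnulusPreimage ha h) (isOpen_annulusPreimage ha)
    (closedAnnulusPreimage_succ_subset h) h.pos (fun z hz => (norm_bounds h hz).1.le)
    (fun z hz => (norm_bounds h hz).2.le) (hSd.const_add _) (hSd.const_sub _) ?_ ?_ ?_
  · exact fun z hz => hinv z hz _ (by linear_combination hSsq z hz)
  · exact fun z hz => hinv z hz _ (by linear_combination hSsq z hz)
  · exact fun z hz => by linear_combination -hSsq z hz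
end

section
/- Let K ⊆ S² be a compact, connected, locally connected set and let x, y, z ∈ K be three pairwise distinct points. Then there are at most two connected components U of S² ∖ K such that all three points x, y, z lie in the frontier of U. -/
/-!
Three components of `S² ∖ K` with three common boundary points would give a drawing of `K₃,₃` in
the plane in which no two independent edges meet, and such a drawing does not exist.

*Building the drawing.* `K` is infinite, so a point `N ∈ K` other than `x, y, z` exists.
Stereographic projection from `N` turns the situation into a planar one without disturbing the
components, which all miss `N`; `K` becomes closed and stays locally connected. Local connectedness
supplies small, far apart, connected sets `V a ⊆ K` containing a neighbourhood in `K` of the `a`-th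
point `x a`. From a base point `u i` of the component `U i`, run inside `U i` to a point very close
to `x a`, then straight towards `x a` until `U i` is left. The exit point lies in `K` close to
`x a`, hence in `V a`, and from there one reaches `x a` inside a thin thickening of `V a`. The first
pieces of these nine paths are compact and disjoint from `K`, so for a thin enough thickening
the paths `i a` and `j b` are disjoint whenever `i ≠ j` and `a ≠ b` (`plane_case`).

*Nonexistence* (`no_K33`). This is the van Kampen obstruction, computed with complex logarithms.
For an edge `γ` and a vertex `v` off `γ`, let `θ(γ, v)` be the increment along `γ` of a continuous
branch of `log (γ - v)`. If `γ`, `δ` are disjoint, then `γ s - δ t` has a continuous logarithm on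
`ℝ × ℝ`, and going around the unit square yields a linear relation between four such increments.
Each increment agrees up to `2πi n`, `n ∈ ℤ`, with the difference of fixed logarithms at its end
points. The 18 relations between these integers (one for each pair of independent edges) add up to
`0 = 9` modulo `2`: each of the 36 integers occurs in exactly two of them, with coefficients `±1`,
while the right-hand side is `1` in the nine cases `(i, a)`, `(j, b)` where `i < j` and `a < b`, and
`0` in the nine cases where `i < j` and `b < a`. Only
independent edges need to be disjoint, so the paths need be neither simple nor disjoint near a
common vertex.
-/

/-- The 2-sphere, realized as the unit sphere in `ℝ³`. -/
abbrev S2 : Set (EuclideanSpace ℝ (Fin 3)) := Metric.sphere 0 1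

open Complex

/-! ### Increments of continuous logarithms -/

/-- `θ` is the increment over `[0, 1]` of a continuous branch of `log (γ - v)`. Curves are
parametrized by all of `ℝ`; those in use are constant outside `[0, 1]`. -/
def LogInc (γ : ℝ → ℂ) (v θ : ℂ) : Prop :=
  ∃ L : ℝ → ℂ, Continuous L ∧ (∀ t, exp (L t) = γ t - v) ∧ L 1 - L 0 = θ

lemma exists_log {A : Type} [TopologicalSpace A] [SimplyConnectedSpace A]
    [LocallyPathConnectedSpace A] (f : C(A, ℂ)) (hf : ∀ a, f a ≠ 0) :
    ∃ L : A → ℂ, Continuous L ∧ ∀ a, exp (L a) = f a := by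
  obtain ⟨a₀⟩ : Nonempty A := inferInstance
  obtain ⟨F, ⟨-, hF⟩, -⟩ := isCoveringMapOn_exp.existsUnique_continuousMap_lifts f (a₀ := a₀)
    (Complex.exp_log (hf a₀)) (fun a => hf a)
  exact ⟨F, F.continuous, fun a => congrFun hF a⟩

lemma exists_logInc {γ : ℝ → ℂ} (hγ : Continuous γ) {v : ℂ} (hv : ∀ t, γ t ≠ v) :
    ∃ θ, LogInc γ v θ := by
  obtain ⟨L, hL, h⟩ := exists_log ⟨fun t => γ t - v, by fun_prop⟩ fun t => sub_ne_zero.2 (hv t)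
  exact ⟨_, L, hL, h, rfl⟩

/-- Two continuous branches differ by a continuous function with values in `2πi ℤ`, that is, by a
constant. -/
lemma increment_eq {L M : ℝ → ℂ} (hL : Continuous L) (hM : Continuous M)
    (h : ∀ t, exp (L t) = exp (M t)) : L 1 - L 0 = M 1 - M 0 := by
  have h1 : ∀ t, ∃ n : ℤ, L t - M t = n * (2 * Real.pi * I) := fun t => by
    obtain ⟨n, hn⟩ := Complex.exp_eq_exp_iff_exists_int.1 (h t)
    exact ⟨n, by rw [hn]; ring⟩
  choose n hn using h1
  have hπ : (2 * Real.pi * I : ℂ) ≠ 0 := Complex.two_pi_I_ne_zero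
  have hc : Continuous n := by
    have h2 : Continuous fun t => ((n t : ℤ) : ℂ) := by
      have : (fun t => ((n t : ℤ) : ℂ)) = fun t => (L t - M t) / (2 * Real.pi * I) := by
        funext t
        rw [hn, mul_div_cancel_right₀ _ hπ]
      rw [this]; fun_prop
    have h3 : Topology.IsClosedEmbedding (Int.cast : ℤ → ℝ) := Int.isClosedEmbedding_coe_real
    rw [h3.isInducing.continuous_iff]
    have := Complex.continuous_re.comp h2
    simpa [Function.comp_def] using this
  have := PreconnectedSpace.constant inferInstance hc (x := 0) (y := 1)
  have h0 := hn 0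
  have h1 := hn 1
  rw [← this] at h1
  linear_combination h1 - h0

lemma LogInc.eq {γ : ℝ → ℂ} {v θ : ℂ} (h : LogInc γ v θ) {L : ℝ → ℂ} (hL : Continuous L)
    (hLe : ∀ t, exp (L t) = γ t - v) : L 1 - L 0 = θ := by
  obtain ⟨M, hM, hMe, rfl⟩ := h
  exact increment_eq hL hM fun t => by rw [hLe, hMe]

/-- The increments of `log (v - γ)` and `log (γ - v)` agree. -/
lemma LogInc.eq_neg {γ : ℝ → ℂ} {v θ : ℂ} (h : LogInc γ v θ) {L : ℝ → ℂ} (hL : Continuous L)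
    (hLe : ∀ t, exp (L t) = v - γ t) : L 1 - L 0 = θ := by
  rw [← h.eq (L := fun t => L t + Real.pi * I) (by fun_prop)
    fun t => by rw [exp_add, hLe, exp_pi_mul_I]; ring]
  ring

/-- The relation obtained by comparing the two ways from `(0, 0)` to `(1, 1)` around the boundary of
the unit square, for a continuous logarithm of `γ s - δ t`. -/
lemma LogInc.square {γ δ : ℝ → ℂ} (hγ : Continuous γ) (hδ : Continuous δ)
    (hd : ∀ s t, γ s ≠ δ t) {θ₁ θ₂ θ₃ θ₄ : ℂ}
    (h₁ : LogInc γ (δ 0) θ₁) (h₂ : LogInc δ (γ 1) θ₂)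
    (h₃ : LogInc δ (γ 0) θ₃) (h₄ : LogInc γ (δ 1) θ₄) : θ₁ + θ₂ = θ₃ + θ₄ := by
  obtain ⟨L, hL, h⟩ := exists_log (A := ℝ × ℝ) ⟨fun p => γ p.1 - δ p.2, by fun_prop⟩
    fun p => sub_ne_zero.2 (hd _ _)
  rw [← h₁.eq (L := fun t => L (t, 0)) (by fun_prop) fun t => h _,
    ← h₄.eq (L := fun t => L (t, 1)) (by fun_prop) fun t => h _,
    ← h₂.eq_neg (L := fun t => L (1, t)) (by fun_prop) fun t => h _,
    ← h₃.eq_neg (L := fun t => L (0, t)) (by fun_prop) fun t => h _]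
  ring

lemma LogInc.exists_int {γ : ℝ → ℂ} {v θ a b : ℂ} (h : LogInc γ v θ)
    (ha : exp a = γ 0 - v) (hb : exp b = γ 1 - v) :
    ∃ n : ℤ, θ = b - a + n * (2 * Real.pi * I) := by
  obtain ⟨L, -, hLe, rfl⟩ := h
  obtain ⟨n, hn⟩ := Complex.exp_eq_exp_iff_exists_int.1 ((hLe 0).trans ha.symm)
  obtain ⟨m, hm⟩ := Complex.exp_eq_exp_iff_exists_int.1 ((hLe 1).trans hb.symm)
  refine ⟨m - n, ?_⟩
  rw [hn, hm]; push_cast; ring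

/-! ### Nonplanarity of the complete bipartite graph on 3 + 3 vertices -/

/-- Logarithms `m i j` of the differences of three points, normalized so that passing from `m i j`
to `m j i`, where `i < j`, adds exactly `πi`. -/
lemma exists_log_sub (u : Fin 3 → ℂ) (hu : ∀ i j, i ≠ j → u i ≠ u j) :
    ∃ m : Fin 3 → Fin 3 → ℂ, (∀ i j, i ≠ j → exp (m i j) = u i - u j) ∧
      ∀ i j, i < j → m j i = m i j + Real.pi * I := by
  refine ⟨fun i j => if i < j then log (u i - u j) else log (u j - u i) + Real.pi * I, ?_, ?_⟩
  · intro i j hij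
    by_cases h : i < j
    · simp only [h, if_true]
      exact exp_log (sub_ne_zero.2 (hu _ _ hij))
    · simp only [h, if_false]
      rw [exp_add, exp_log (sub_ne_zero.2 (hu _ _ hij.symm)), exp_pi_mul_I]; ring
  · intro i j hij
    simp only [hij, if_true, hij.not_gt, if_false]

/-- There is no planar drawing of `K₃,₃`, with vertices `u i` and `w a` and edges `e i a`, in which
any two edges without a common vertex are disjoint. -/
theorem no_K33 (u w : Fin 3 → ℂ) (e : Fin 3 → Fin 3 → ℝ → ℂ)
    (he : ∀ i a, Continuous (e i a)) (h0 : ∀ i a, e i a 0 = u i) (h1 : ∀ i a, e i a 1 = w a)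
    (hd : ∀ i j a b, i ≠ j → a ≠ b → ∀ s t, e i a s ≠ e j b t) : False := by
  have third : ∀ a b : Fin 3, ∃ c, c ≠ a ∧ c ≠ b := by decide
  have hu : ∀ i j a, i ≠ j → ∀ t, e i a t ≠ u j := fun i j a hij t => by
    obtain ⟨b, hb, -⟩ := third a a
    rw [← h0 j b]; exact hd _ _ _ _ hij hb.symm _ _
  have hw : ∀ i a b, a ≠ b → ∀ t, e i a t ≠ w b := fun i a b hab t => by
    obtain ⟨j, hj, -⟩ := third i i
    rw [← h1 j b]; exact hd _ _ _ _ hj.symm hab _ _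
  have huw : ∀ i a, w a ≠ u i := fun i a => by
    obtain ⟨j, hj, -⟩ := third i i
    rw [← h1 j a]; exact hu _ _ _ hj _
  obtain ⟨m, hm, hm'⟩ := exists_log_sub u fun i j hij => by
    rw [← h0 i 0]; exact hu _ _ _ hij _
  obtain ⟨d, hdd, hd'⟩ := exists_log_sub w fun a b hab => by
    rw [← h1 0 a]; exact hw _ _ _ hab _
  have hc : ∀ a i, exp (log (w a - u i)) = w a - u i := fun a i =>
    exp_log (sub_ne_zero.2 (huw i a))
  have hc' : ∀ a i, exp (log (w a - u i) + Real.pi * I) = u i - w a := fun a i => by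
    rw [exp_add, hc, exp_pi_mul_I]; ring
  -- `n` and `k` measure how far the increments around the vertices `u j` and `w b` are from the
  -- differences of the logarithms fixed above.
  have hn : ∀ i a j, ∃ n : ℤ, i ≠ j →
      LogInc (e i a) (u j) (log (w a - u j) - m i j + n * (2 * Real.pi * I)) := by
    intro i a j
    by_cases hij : i = j
    · exact ⟨0, fun h => (h hij).elim⟩
    obtain ⟨θ, hθ⟩ := exists_logInc (he i a) (hu i j a hij)
    obtain ⟨n, rfl⟩ := hθ.exists_int (by rw [h0]; exact hm i j hij) (by rw [h1]; exact hc a j)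
    exact ⟨n, fun _ => hθ⟩
  have hk : ∀ i a b, ∃ n : ℤ, a ≠ b → LogInc (e i a) (w b)
      (d a b - (log (w b - u i) + Real.pi * I) + n * (2 * Real.pi * I)) := by
    intro i a b
    by_cases hab : a = b
    · exact ⟨0, fun h => (h hab).elim⟩
    obtain ⟨θ, hθ⟩ := exists_logInc (he i a) (hw i a b hab)
    obtain ⟨n, rfl⟩ := hθ.exists_int (by rw [h0]; exact hc' b i) (by rw [h1]; exact hdd a b hab)
    exact ⟨n, fun _ => hθ⟩
  choose n hn using hn
  choose k hk using hk
  have hπ : (2 * Real.pi * I : ℂ) ≠ 0 := Complex.two_pi_I_ne_zero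
  have key : ∀ i j a b, i ≠ j → a ≠ b →
      (m j i - m i j) + (d b a - d a b) =
        (n j b i + k i a b - n i a j - k j b a : ℤ) * (2 * Real.pi * I) := by
    intro i j a b hij hab
    have := LogInc.square (he i a) (he j b) (hd i j a b hij hab)
      (by rw [h0]; exact hn i a j hij) (by rw [h1]; exact hk j b a hab.symm)
      (by rw [h0]; exact hn j b i hij.symm) (by rw [h1]; exact hk i a b hab)
    push_cast
    linear_combination this
  have key₁ : ∀ i j a b, i < j → a < b → n j b i + k i a b - n i a j - k j b a = 1 := by
    intro i j a b hij hab
    have h := key i j a b hij.ne hab.ne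
    rw [hm' i j hij, hd' a b hab] at h
    have : ((n j b i + k i a b - n i a j - k j b a : ℤ) : ℂ) = (1 : ℤ) :=
      mul_right_cancel₀ hπ (by rw [← h]; push_cast; ring)
    exact_mod_cast this
  have key₂ : ∀ i j a b, i < j → b < a → n j b i + k i a b - n i a j - k j b a = 0 := by
    intro i j a b hij hab
    have h := key i j a b hij.ne hab.ne'
    rw [hm' i j hij, hd' b a hab] at h
    have : ((n j b i + k i a b - n i a j - k j b a : ℤ) : ℂ) = (0 : ℤ) :=
      mul_right_cancel₀ hπ (by rw [← h]; push_cast; ring)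
    exact_mod_cast this
  -- The sum of these 18 equations reads `0 = 9` modulo `2`.
  have := key₁ 0 1 0 1 (by decide) (by decide)
  have := key₁ 0 1 0 2 (by decide) (by decide)
  have := key₁ 0 1 1 2 (by decide) (by decide)
  have := key₁ 0 2 0 1 (by decide) (by decide)
  have := key₁ 0 2 0 2 (by decide) (by decide)
  have := key₁ 0 2 1 2 (by decide) (by decide)
  have := key₁ 1 2 0 1 (by decide) (by decide)
  have := key₁ 1 2 0 2 (by decide) (by decide)
  have := key₁ 1 2 1 2 (by decide) (by decide)
  have := key₂ 0 1 1 0 (by decide) (by decide)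
  have := key₂ 0 1 2 0 (by decide) (by decide)
  have := key₂ 0 1 2 1 (by decide) (by decide)
  have := key₂ 0 2 1 0 (by decide) (by decide)
  have := key₂ 0 2 2 0 (by decide) (by decide)
  have := key₂ 0 2 2 1 (by decide) (by decide)
  have := key₂ 1 2 1 0 (by decide) (by decide)
  have := key₂ 1 2 2 0 (by decide) (by decide)
  have := key₂ 1 2 2 1 (by decide) (by decide)
  omega

open Set Metric Topology

/-! ### The planar case -/

/-- On a segment leaving the open set `U`, there is a first point `p` outside `U`. -/
lemma first_exit {U : Set ℂ} (hU : IsOpen U) {a b : ℂ} (ha : a ∈ U) (hb : b ∉ U) :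
    ∃ p ∈ segment ℝ a b, p ∉ U ∧ p ∈ closure U ∧ segment ℝ a p ⊆ insert p U := by
  have hc : Continuous (AffineMap.lineMap a b : ℝ → ℂ) := AffineMap.lineMap_continuous
  have hS : IsCompact (Icc (0 : ℝ) 1 ∩ (AffineMap.lineMap a b : ℝ → ℂ) ⁻¹' Uᶜ) :=
    isCompact_Icc.inter_right (hU.isClosed_compl.preimage hc)
  obtain ⟨T, ⟨hT, hTU⟩, hmin⟩ := hS.exists_isLeast ⟨1, by simp, by simpa using hb⟩
  have hsub : segment ℝ a (AffineMap.lineMap a b T) ⊆ insert (AffineMap.lineMap a b T) U := by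
    rw [segment_eq_image_lineMap]
    rintro _ ⟨s, hs, rfl⟩
    rcases hs.2.eq_or_lt with rfl | h1
    · left; simp
    right
    have hT0 : 0 < T := by
      refine hT.1.lt_of_ne fun h => hTU ?_
      simpa [← h] using ha
    by_contra hq
    have e : (AffineMap.lineMap a (AffineMap.lineMap a b T : ℂ) s : ℂ)
        = AffineMap.lineMap a b (s * T) := by
      simp only [AffineMap.lineMap_apply, vsub_eq_sub, vadd_eq_add, real_smul]
      push_cast; ring
    rw [e] at hq
    have : T ≤ s * T := hmin ⟨⟨mul_nonneg hs.1 hT.1, by nlinarith [hs.1, hT.2]⟩, hq⟩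
    nlinarith
  refine ⟨AffineMap.lineMap a b T, ?_, hTU, ?_, hsub⟩
  · rw [segment_eq_image_lineMap]; exact ⟨T, hT, rfl⟩
  · have hne : a ≠ AffineMap.lineMap a b T := fun h => hTU (h ▸ ha)
    have h1 := right_mem_segment ℝ a (AffineMap.lineMap a b T : ℂ)
    rw [← closure_openSegment] at h1
    refine closure_mono (fun q hq => ?_) h1
    rcases hsub (openSegment_subset_segment _ _ _ hq) with rfl | h
    · exact (hne (right_mem_openSegment_iff.1 hq)).elim
    · exact h

lemma exists_small_connected {K : Set ℂ} [LocallyConnectedSpace K] {x : ℂ} (hx : x ∈ K)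
    {ε : ℝ} (hε : 0 < ε) :
    ∃ V : Set ℂ, ∃ δ > 0, δ ≤ ε ∧ IsPreconnected V ∧ V ⊆ K ∧ V ⊆ ball x ε ∧
      K ∩ ball x δ ⊆ V := by
  obtain ⟨V, hV, hVc, hVs⟩ := (locallyConnectedSpace_iff_connected_subsets (α := K)).1
    inferInstance ⟨x, hx⟩ (ball ⟨x, hx⟩ ε) (ball_mem_nhds _ hε)
  obtain ⟨δ, hδ, hδV⟩ := Metric.mem_nhds_iff.1 hV
  refine ⟨Subtype.val '' V, min δ ε, lt_min hδ hε, min_le_right _ _,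
    hVc.image _ continuous_subtype_val.continuousOn, ?_, ?_, ?_⟩
  · rintro _ ⟨v, -, rfl⟩; exact v.2
  · rintro _ ⟨v, hv, rfl⟩; exact hVs hv
  · rintro y ⟨hyK, hy⟩
    exact ⟨⟨y, hyK⟩, hδV (ball_subset_ball (min_le_left _ _) hy : y ∈ ball x δ), rfl⟩

lemma thickening_joinedIn {V : Set ℂ} (hV : IsPreconnected V) {η : ℝ} (hη : 0 < η) {p q : ℂ}
    (hp : p ∈ V) (hq : q ∈ V) : JoinedIn (thickening η V) p q := by
  have h1 : IsConnected (thickening η V) := by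
    have : thickening η V = (fun z : ℂ × ℂ => z.1 + z.2) '' (V ×ˢ ball 0 η) := by
      rw [Set.image_prod, Set.image2_add, add_ball_zero]
    rw [this]
    exact (IsConnected.prod ⟨⟨p, hp⟩, hV⟩
      ((convex_ball _ _).isConnected (nonempty_ball.2 hη))).image _ (by fun_prop)
  exact (isOpen_thickening.isConnected_iff_isPathConnected.1 h1).joinedIn _
    (self_subset_thickening hη _ hp) _ (self_subset_thickening hη _ hq)

/-- The planar form of the result. Here `K` is neither compact nor connected: it will be the image
of a continuum minus a point, under stereographic projection from that point. -/
theorem plane_case {K : Set ℂ} (hK : IsClosed K) [LocallyConnectedSpace K]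
    (x : Fin 3 → ℂ) (hx : Function.Injective x) (hxK : ∀ a, x a ∈ K)
    (U : Fin 3 → Set ℂ) (hUo : ∀ i, IsOpen (U i)) (hUc : ∀ i, IsConnected (U i))
    (hUd : ∀ i j, i ≠ j → Disjoint (U i) (U j)) (hUK : ∀ i, Disjoint (U i) K)
    (hcl : ∀ i, closure (U i) ⊆ U i ∪ K) (hxU : ∀ i a, x a ∈ closure (U i)) : False := by
  -- Balls of radius `2 * ε` around the three points are disjoint.
  obtain ⟨ε, hε, hxε⟩ : ∃ ε > 0, ∀ a b, a ≠ b → 4 * ε < dist (x a) (x b) := by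
    have h : ∀ᶠ ε : ℝ in 𝓝[>] 0, ∀ a b, a ≠ b → 4 * ε < dist (x a) (x b) := by
      refine Filter.eventually_all.2 fun a => Filter.eventually_all.2 fun b => ?_
      by_cases hab : a = b
      · simp [hab]
      · have : Filter.Tendsto (fun ε : ℝ => 4 * ε) (𝓝[>] 0) (𝓝 0) :=
          ((continuous_const_mul (4 : ℝ)).tendsto' 0 0 (by simp)).mono_left nhdsWithin_le_nhds
        filter_upwards [this.eventually_lt_const (dist_pos.2 (hx.ne hab))] with ε h _ using h
    obtain ⟨ε, h1, h2⟩ := (h.and self_mem_nhdsWithin).exists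
    exact ⟨ε, h2, h1⟩
  choose V δ hδ hδε hVc hVK hVε hVδ using fun a => exists_small_connected (hxK a) hε
  have hxV : ∀ a, x a ∈ V a := fun a => hVδ a ⟨hxK a, mem_ball_self (hδ a)⟩
  choose u hu using fun i => (hUc i).nonempty
  have hacc : ∀ i a, ∃ q, q ∈ U i ∧ q ∈ ball (x a) (δ a) := fun i a => by
    obtain ⟨q, hq, hd⟩ := Metric.mem_closure_iff.1 (hxU i a) (δ a) (hδ a)
    exact ⟨q, hq, by rwa [mem_ball, dist_comm]⟩
  choose q hqU hqδ using hacc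
  have hγ : ∀ i a, JoinedIn (U i) (u i) (q i a) := fun i a =>
    ((hUo i).isConnected_iff_isPathConnected.1 (hUc i)).joinedIn _ (hu i) _ (hqU i a)
  have hlast : ∀ i a, ∃ p, p ∈ V a ∧ segment ℝ (q i a) p ⊆ (ball (x a) ε ∩ U i) ∪ V a := by
    intro i a
    obtain ⟨p, hp, hpU, hpcl, hseg⟩ := first_exit (hUo i) (hqU i a)
      (fun h => (hUK i).le_bot ⟨h, hxK a⟩ : x a ∉ U i)
    have hball : segment ℝ (q i a) p ⊆ ball (x a) (δ a) := by
      refine (convex_ball _ _).segment_subset (hqδ i a) ?_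
      exact (convex_ball _ _).segment_subset (hqδ i a) (mem_ball_self (hδ a)) hp
    have hpV : p ∈ V a := hVδ a ⟨(hcl i hpcl).resolve_left hpU, hball (right_mem_segment _ _ _)⟩
    refine ⟨p, hpV, fun z hz => ?_⟩
    rcases hseg hz with rfl | h
    · exact Or.inr hpV
    · exact Or.inl ⟨ball_subset_ball (hδε a) (hball hz), h⟩
  choose p hpV hseg using hlast
  -- The initial pieces are compact in the complement of `K`, so thin thickenings of `K` miss them.
  let C : Fin 3 → Fin 3 → Set ℂ := fun i a => range (hγ i a).somePath
  have hCU : ∀ i a, C i a ⊆ U i := by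
    rintro i a _ ⟨t, rfl⟩; exact (hγ i a).somePath_mem t
  have hCc : IsCompact (⋃ i, ⋃ a, C i a) :=
    isCompact_iUnion fun i => isCompact_iUnion fun a =>
      isCompact_range (hγ i a).somePath.continuous
  have hCK : Disjoint (⋃ i, ⋃ a, C i a) K := by
    simp only [disjoint_iUnion_left]
    exact fun i a => (hUK i).mono_left (hCU i a)
  obtain ⟨η', hη', hη'd⟩ := hCK.exists_thickenings hCc hK
  obtain ⟨η, hη, hηη', hηε⟩ : ∃ η > 0, η ≤ η' ∧ η ≤ ε :=
    ⟨min η' ε, lt_min hη' hε, min_le_left _ _, min_le_right _ _⟩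
  let B : Fin 3 → Set ℂ := fun a => thickening η (V a)
  have hVB : ∀ a, V a ⊆ B a := fun a => self_subset_thickening hη _
  have hCB : ∀ i a b, Disjoint (C i a) (B b) := fun i a b =>
    hη'd.mono ((subset_iUnion₂ (s := fun i a => C i a) i a).trans (self_subset_thickening hη' _))
      ((thickening_mono hηη' _).trans (thickening_subset_of_subset _ (hVK b)))
  have hBball : ∀ a, B a ⊆ ball (x a) (2 * ε) := by
    intro a z hz
    obtain ⟨v, hv, hzv⟩ := mem_thickening_iff.1 hz
    have := mem_ball.1 (hVε a hv)
    rw [mem_ball]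
    linarith [dist_triangle z v (x a)]
  have hballs : ∀ a b, a ≠ b → Disjoint (ball (x a) (2 * ε)) (ball (x b) (2 * ε)) :=
    fun a b hab => ball_disjoint_ball (by linarith [hxε a b hab])
  have hball2 : ∀ a, ball (x a) ε ⊆ ball (x a) (2 * ε) := fun a =>
    ball_subset_ball (by linarith)
  have hJ : ∀ i a, JoinedIn (C i a ∪ ((ball (x a) ε ∩ U i) ∪ B a)) (u i) (x a) := by
    intro i a
    have h1 : JoinedIn (C i a) (u i) (q i a) := ⟨(hγ i a).somePath, fun t => ⟨t, rfl⟩⟩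
    have h2 : JoinedIn (segment ℝ (q i a) (p i a)) (q i a) (p i a) :=
      ((convex_segment _ _).isPathConnected ⟨_, left_mem_segment _ _ _⟩).joinedIn _
        (left_mem_segment _ _ _) _ (right_mem_segment _ _ _)
    have h3 : JoinedIn (B a) (p i a) (x a) := thickening_joinedIn (hVc a) hη (hpV i a) (hxV a)
    refine ((h1.mono subset_union_left).trans (h2.mono ?_)).trans (h3.mono ?_)
    · exact (hseg i a).trans ((union_subset_union_right _ (hVB a)).trans subset_union_right)
    · exact subset_union_right.trans subset_union_right
  have hdisj : ∀ i j a b, i ≠ j → a ≠ b → Disjoint (C i a ∪ ((ball (x a) ε ∩ U i) ∪ B a))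
      (C j b ∪ ((ball (x b) ε ∩ U j) ∪ B b)) := by
    intro i j a b hij hab
    have hU := hUd i j hij
    have hb := hballs a b hab
    simp only [disjoint_union_left, disjoint_union_right]
    exact ⟨⟨hU.mono (hCU i a) (hCU j b), hU.mono inter_subset_right (hCU j b),
        (hCB j b a).symm⟩,
      ⟨hU.mono (hCU i a) inter_subset_right, hU.mono inter_subset_right inter_subset_right,
        hb.mono (hBball a) (inter_subset_left.trans (hball2 b))⟩,
      hCB i a b, hb.mono (inter_subset_left.trans (hball2 a)) (hBball b),
      hb.mono (hBball a) (hBball b)⟩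
  refine no_K33 u x (fun i a => (hJ i a).somePath.extend)
    (fun i a => (hJ i a).somePath.continuous_extend) (fun i a => by simp) (fun i a => by simp) ?_
  intro i j a b hij hab s t h
  exact (hdisj i j a b hij hab).ne_of_mem ((hJ i a).somePath_mem _) ((hJ j b).somePath_mem _) h

/-! ### Passage to the sphere -/

lemma exists_chart (N : S2) : ∃ ψ : ℂ → S2, IsOpenEmbedding ψ ∧ range ψ = {N}ᶜ := by
  have : Fact (Module.finrank ℝ (EuclideanSpace ℝ (Fin 3)) = 2 + 1) := ⟨by simp⟩
  let f := (stereographic' 2 N).symm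
  have hf : f.source = univ := stereographic'_target N
  have hr : range f = {N}ᶜ := by
    rw [← image_univ, ← hf, f.image_source_eq_target]
    exact stereographic'_source N
  let g : ℂ ≃ₜ EuclideanSpace ℝ (Fin 2) :=
    Complex.orthonormalBasisOneI.repr.toHomeomorph
  refine ⟨f ∘ g, (f.isOpenEmbedding hf).comp g.isOpenEmbedding, ?_⟩
  rw [g.surjective.range_comp, hr]

theorem sphere_case {K : Set S2} (hK : IsClosed K) (hKc : IsConnected K)
    [LocallyConnectedSpace K] (x : Fin 3 → S2) (hx : Function.Injective x) (hxK : ∀ a, x a ∈ K)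
    (U : Fin 3 → Set S2) (hUo : ∀ i, IsOpen (U i)) (hUc : ∀ i, IsConnected (U i))
    (hUd : ∀ i j, i ≠ j → Disjoint (U i) (U j)) (hUK : ∀ i, Disjoint (U i) K)
    (hcl : ∀ i, closure (U i) ⊆ U i ∪ K) (hxU : ∀ i a, x a ∈ closure (U i)) : False := by
  -- Projecting from a point of `K` leaves the sets `U i` untouched, hence connected.
  obtain ⟨N, hNK, hNx⟩ : ∃ N ∈ K, N ∉ range x :=
    (hKc.isPreconnected.infinite_of_nontrivial
      ⟨x 0, hxK 0, x 1, hxK 1, hx.ne (by decide)⟩).exists_notMem_finite (finite_range x)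
  obtain ⟨ψ, hψ, hr⟩ := exists_chart N
  have hne : ∀ a, x a ∈ range ψ := fun a => by
    rw [hr]; rintro rfl; exact hNx ⟨a, rfl⟩
  choose y hy using hne
  have : LocallyConnectedSpace (ψ ⁻¹' K) := (hψ.restrictPreimage K).locallyConnectedSpace
  have hclψ : ∀ S, closure (ψ ⁻¹' S) = ψ ⁻¹' closure S := fun S =>
    (hψ.isOpenMap.preimage_closure_eq_closure_preimage hψ.continuous S).symm
  refine plane_case (K := ψ ⁻¹' K) (hK.preimage hψ.continuous) y
    (fun a b h => hx (by rw [← hy, ← hy, h])) (fun a => by simpa [hy] using hxK a)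
    (fun i => ψ ⁻¹' U i) (fun i => (hUo i).preimage hψ.continuous)
    (fun i => (hUc i).preimage_of_isOpenMap hψ.injective hψ.isOpenMap ?_)
    (fun i j hij => (hUd i j hij).preimage ψ) (fun i => (hUK i).preimage ψ)
    (fun i => ?_) (fun i a => ?_)
  · rw [hr]; rintro z hz rfl; exact (hUK i).le_bot ⟨hz, hNK⟩
  · rw [hclψ]; exact preimage_mono (hcl i)
  · rw [hclψ, mem_preimage, hy]; exact hxU i a

lemma closure_component_subset {X : Type*} [TopologicalSpace X] [LocallyConnectedSpace X]
    {K : Set X} (hK : IsClosed K) (w : X) :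
    closure (connectedComponentIn Kᶜ w) ⊆ connectedComponentIn Kᶜ w ∪ K := by
  intro p hp
  by_contra h
  rw [mem_union, not_or] at h
  have hpo := hK.isOpen_compl.connectedComponentIn (x := p)
  obtain ⟨z, hzp, hzw⟩ := mem_closure_iff.1 hp _ hpo (mem_connectedComponentIn h.2)
  apply h.1
  rw [connectedComponentIn_eq hzw, ← connectedComponentIn_eq hzp]
  exact mem_connectedComponentIn h.2

lemma component_disjoint {X : Type*} [TopologicalSpace X] {F : Set X} {v w : X}
    (h : connectedComponentIn F v ≠ connectedComponentIn F w) :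
    Disjoint (connectedComponentIn F v) (connectedComponentIn F w) := by
  rw [Set.disjoint_left]
  intro z hv hw
  exact h ((connectedComponentIn_eq hv).trans (connectedComponentIn_eq hw).symm)

/-- For a compact, connected, locally connected set `K ⊆ S²` and three pairwise distinct
points `x, y, z ∈ K`, at most two connected components of `S² ∖ K` have all of `x, y, z`
on their frontier. -/
theorem at_most_two_components_with_three_boundary_points
    (K : Set S2) (hKcompact : IsCompact K) (hKconn : IsConnected K)
    (hKlc : LocallyConnectedSpace K)
    (x y z : S2) (hx : x ∈ K) (hy : y ∈ K) (hz : z ∈ K)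
    (hxy : x ≠ y) (hxz : x ≠ z) (hyz : y ≠ z) :
    ∀ U V W : Set S2,
      ((∃ w ∈ Kᶜ, U = connectedComponentIn Kᶜ w) ∧
        x ∈ frontier U ∧ y ∈ frontier U ∧ z ∈ frontier U) →
      ((∃ w ∈ Kᶜ, V = connectedComponentIn Kᶜ w) ∧
        x ∈ frontier V ∧ y ∈ frontier V ∧ z ∈ frontier V) →
      ((∃ w ∈ Kᶜ, W = connectedComponentIn Kᶜ w) ∧
        x ∈ frontier W ∧ y ∈ frontier W ∧ z ∈ frontier W) →
      U = V ∨ U = W ∨ V = W := by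
  rintro _ _ _ ⟨⟨u, hu, rfl⟩, hUx, hUy, hUz⟩ ⟨⟨v, hv, rfl⟩, hVx, hVy, hVz⟩
    ⟨⟨w, hw, rfl⟩, hWx, hWy, hWz⟩
  by_contra! h
  obtain ⟨huv, huw, hvw⟩ := h
  have : Fact (Module.finrank ℝ (EuclideanSpace ℝ (Fin 3)) = 2 + 1) := ⟨by simp⟩
  have : LocallyConnectedSpace S2 :=
    ChartedSpace.locallyConnectedSpace (EuclideanSpace ℝ (Fin 2)) S2
  have hK := hKcompact.isClosed
  have hc : ∀ i, ![u, v, w] i ∈ Kᶜ := by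
    intro i; fin_cases i <;> assumption
  refine sphere_case hK hKconn ![x, y, z] ?_ ?_
    (fun i => connectedComponentIn Kᶜ (![u, v, w] i))
    (fun i => hK.isOpen_compl.connectedComponentIn)
    (fun i => isConnected_connectedComponentIn_iff.2 (hc i)) (fun i j hij => component_disjoint ?_)
    (fun i => disjoint_compl_left.mono_left (connectedComponentIn_subset _ _))
    (fun i => closure_component_subset hK _) ?_
  · intro i j hij
    fin_cases i <;> fin_cases j <;> simp_all
  · intro i; fin_cases i <;> assumption
  · fin_cases i <;> fin_cases j <;> simp_all [Ne.symm]
  · intro i a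
    fin_cases i <;> fin_cases a <;> apply frontier_subset_closure <;> assumption
end
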